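/- Let n ≥ 3 and let λ be a partition of n. Then Σ_{π ∈ C_λ} occ₍₃₋₂₋₁₎(π) = |C_λ| · ( C(n,3)/6 − (n+1)(n−3)·X₁/30 + (n+1)·X₂/30 − (2n−3)·X₃/30 + X₄/15 ), where occ₍₃₋₂₋₁₎(π) = #{(i,j,k) : 1 ≤ i < j < k ≤ n, π(i) > π(j) > π(k)} is the number of occurrences of the classical pattern 321 in π. -/

import Mathlib

open Equiv Finset

/-- The conjugacy class of permutations of `Fin n` with cycle type `lam`
(cycle type includes fixed points as parts of size 1, via `Equiv.Perm.partition`). -/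
def conjClass (n : ℕ) (lam : n.Partition) : Finset (Equiv.Perm (Fin n)) :=
  Finset.univ.filter fun π => (Equiv.Perm.partition π).parts = lam.parts

/-!
Averaging over a conjugacy class is averaging over the conjugates `σ * π * σ⁻¹` with `σ` uniform.
Up to a factor `3!`, the occurrences of 321 in `σ * π * σ⁻¹` are the embeddings `e : Fin 3 ↪ α`
such that `σ` orders `π ∘ e` oppositely to `e`. For fixed `e` and uniform `σ`, the probability of
this event depends only on which entries of `π ∘ e` coincide with which entries of `e`: it is found
on a model with at most six points, for each of the 34 possible overlaps, and it is the
symmetrisation over `Perm (Fin 3)` of an integer combination of products of the indicators of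
`π (e i) = e j`. Inclusion–exclusion turns the sum of such a product over all embeddings into a
polynomial in `Fintype.card α` and the numbers of fixed points of `π`, `π ^ 2`, `π ^ 3`, which are
`p`, `p + 2 * q`, `p + 3 * r`.
-/

section FixedPointsOfPowers

variable {α : Type*} [Fintype α] [DecidableEq α]

/-- The number of fixed points of `π ^ k`. For `k = 1, 2, 3` it encodes the numbers of cycles of
length `1, 2, 3` of `π`. -/
def powFixedCount (π : Perm α) (k : ℕ) : ℕ := #{a | (π ^ k) a = a}

lemma filter_pow_apply_eq_self (π : Perm α) (k : ℕ) :
    ({a | (π ^ k) a = a} : Finset α) =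
      π.supportᶜ ∪ {c ∈ π.cycleFactorsFinset | #c.support ∣ k}.biUnion Perm.support := by
  ext a
  simp only [mem_filter, mem_univ, true_and, mem_union, mem_compl, Perm.mem_support, not_not,
    mem_biUnion]
  by_cases ha : π a = a
  · simp [ha, Perm.pow_apply_eq_self_of_apply_eq_self ha]
  have dvd_iff {c : Perm α} (hc : c ∈ π.cycleFactorsFinset) (hac : a ∈ c.support) :
      #c.support ∣ k ↔ (π ^ k) a = a :=
    ((Perm.isCycleOn_support_of_mem_cycleFactorsFinset hc).pow_apply_eq hac).symm
  have cycleOf_mem : π.cycleOf a ∈ π.cycleFactorsFinset :=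
    Perm.cycleOf_mem_cycleFactorsFinset_iff.2 (Perm.mem_support.2 ha)
  have mem_cycleOf : a ∈ (π.cycleOf a).support :=
    Perm.mem_support_cycleOf_iff.2 ⟨.refl _ _, Perm.mem_support.2 ha⟩
  constructor
  · intro h
    exact .inr ⟨π.cycleOf a, ⟨cycleOf_mem, (dvd_iff cycleOf_mem mem_cycleOf).2 h⟩,
      Perm.mem_support.1 mem_cycleOf⟩
  · rintro (h | ⟨c, ⟨hc, hdvd⟩, hac⟩)
    · exact absurd h ha
    · exact (dvd_iff hc (Perm.mem_support.2 hac)).1 hdvd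

lemma powFixedCount_eq_sum_filter_dvd (π : Perm α) (k : ℕ) :
    powFixedCount π k = (π.partition.parts.filter (· ∣ k)).sum := by
  have supports_disjoint :
      (↑{c ∈ π.cycleFactorsFinset | #c.support ∣ k} : Set (Perm α)).PairwiseDisjoint
        Perm.support := fun c hc d hd hcd =>
    (π.cycleFactorsFinset_pairwise_disjoint (mem_filter.1 hc).1 (mem_filter.1 hd).1
      hcd).disjoint_support
  have disjoint_compl : Disjoint π.supportᶜ
      ({c ∈ π.cycleFactorsFinset | #c.support ∣ k}.biUnion Perm.support) :=
    disjoint_compl_left.mono_right <| biUnion_subset.2 fun c hc =>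
      Perm.mem_cycleFactorsFinset_support_le (mem_filter.1 hc).1
  rw [powFixedCount, filter_pow_apply_eq_self, card_union_of_disjoint disjoint_compl,
    card_biUnion supports_disjoint, card_compl, Perm.parts_partition, Multiset.filter_add,
    Multiset.sum_add, add_comm, Perm.cycleType_def, Multiset.filter_map]
  congr 1
  rw [Multiset.filter_eq_self.2 fun d hd => ?_]
  · simp
  · simp [Multiset.eq_of_mem_replicate hd]

lemma sum_filter_dvd_eq_sum_divisors (s : Multiset ℕ) {k : ℕ} (hk : k ≠ 0) :
    (s.filter (· ∣ k)).sum = ∑ d ∈ k.divisors, s.count d * d := by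
  have subset_divisors : (s.filter (· ∣ k)).toFinset ⊆ k.divisors := fun d hd =>
    Nat.mem_divisors.2 ⟨(Multiset.mem_filter.1 (Multiset.mem_toFinset.1 hd)).2, hk⟩
  rw [sum_multiset_count_of_subset _ _ subset_divisors]
  refine sum_congr rfl fun d hd => ?_
  rw [Multiset.count_filter_of_pos (p := (· ∣ k)) (Nat.dvd_of_mem_divisors hd), smul_eq_mul]

lemma powFixedCount_eq_sum_divisors (π : Perm α) {k : ℕ} (hk : k ≠ 0) :
    powFixedCount π k = ∑ d ∈ k.divisors, π.partition.parts.count d * d :=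
  (powFixedCount_eq_sum_filter_dvd π k).trans (sum_filter_dvd_eq_sum_divisors _ hk)

end FixedPointsOfPowers

section SumsOverEmbeddings

variable {α ι M : Type*} [Fintype α] [Fintype ι] [DecidableEq ι]

lemma sum_embedding_sum_perm_comp [NonAssocSemiring M] (f : (ι → α) → M) :
    ∑ e : ι ↪ α, ∑ τ : Perm ι, f (e ∘ τ) = (Fintype.card ι).factorial * ∑ e : ι ↪ α, f e := by
  have sum_comp (τ : Perm ι) : ∑ e : ι ↪ α, f (e ∘ τ) = ∑ e : ι ↪ α, f e :=
    Fintype.sum_equiv (τ.symm.embeddingCongr (.refl α)) _ (fun e => f e) fun _ => rfl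
  rw [sum_comm]
  simp only [sum_comp, sum_const, card_univ, Fintype.card_perm, nsmul_eq_mul]

lemma sum_embedding_eq_sum_ite [AddCommMonoid M] [DecidableEq α] (f : (ι → α) → M) :
    ∑ e : ι ↪ α, f e = ∑ x : ι → α, if Function.Injective x then f x else 0 := by
  rw [← sum_filter, sum_subtype _ (p := Function.Injective) (by simp)]
  exact (Fintype.sum_equiv (Equiv.subtypeInjectiveEquivEmbedding ι α) _ _ fun _ => rfl).symm

lemma sum_fun_fin_three [AddCommMonoid M] (f : (Fin 3 → α) → M) :
    ∑ x : Fin 3 → α, f x = ∑ a, ∑ b, ∑ c, f ![a, b, c] := by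
  let triple : (α × α × α) ≃ (Fin 3 → α) :=
    { toFun := fun t => ![t.1, t.2.1, t.2.2]
      invFun := fun x => (x 0, x 1, x 2)
      left_inv := fun _ => rfl
      right_inv := fun x => by ext i; fin_cases i <;> rfl }
  simp only [← Fintype.sum_prod_type']
  exact (Fintype.sum_equiv triple _ _ fun _ => rfl).symm

lemma injective_vec_three {β : Type*} {a b c : β} :
    Function.Injective ![a, b, c] ↔ a ≠ b ∧ a ≠ c ∧ b ≠ c := by
  rw [← List.nodup_ofFn, List.ofFn_succ, List.ofFn_succ, List.ofFn_succ, List.ofFn_zero]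
  simp [and_assoc]

lemma sum_embedding_fin_three [AddCommGroup M] (f : α → α → α → M) :
    ∑ e : Fin 3 ↪ α, f (e 0) (e 1) (e 2) =
      ∑ a, ∑ b, ∑ c, f a b c - ∑ a, ∑ c, f a a c - ∑ a, ∑ b, f a b a - ∑ a, ∑ b, f a b b
        + 2 • ∑ a, f a a a := by
  classical
  have incl_excl (a b c : α) : (if Function.Injective ![a, b, c] then f a b c else 0) =
      f a b c - (if a = b then f a a c else 0) - (if a = c then f a b a else 0)
        - (if b = c then f a b b else 0)
        + if a = b then if a = c then 2 • f a a a else 0 else 0 := by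
    simp only [injective_vec_three]
    by_cases hab : a = b <;> by_cases hac : a = c <;> by_cases hbc : b = c <;>
      simp_all [two_nsmul]
  calc ∑ e : Fin 3 ↪ α, f (e 0) (e 1) (e 2)
      = ∑ a, ∑ b, ∑ c, if Function.Injective ![a, b, c] then f a b c else 0 :=
        (sum_embedding_eq_sum_ite fun x => f (x 0) (x 1) (x 2)).trans (sum_fun_fin_three _)
    _ = _ := by
        simp only [incl_excl, sum_sub_distrib, sum_add_distrib]
        simp [sum_ite_irrel, smul_sum]

end SumsOverEmbeddings

section PermIndicator

variable {α : Type*} [DecidableEq α] (π : Perm α)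

/-- The indicator of `π a = b`, i.e. the `(a, b)` entry of the permutation matrix of `π`. -/
def permIndicator (a b : α) : ℤ := if π a = b then 1 else 0

lemma permIndicator_mul_self (a b : α) :
    permIndicator π a b * permIndicator π a b = permIndicator π a b := by
  simp [permIndicator]

lemma permIndicator_loop_mul (a b : α) :
    permIndicator π a a * (permIndicator π a b * permIndicator π b a) =
      if a = b then permIndicator π a a else 0 := by
  simp only [permIndicator]
  split_ifs <;> simp_all

variable [Fintype α]

lemma sum_permIndicator_right (a : α) : ∑ b, permIndicator π a b = 1 := by
  simp [permIndicator]

lemma sum_permIndicator_left (b : α) : ∑ a, permIndicator π a b = 1 := by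
  simp [permIndicator, ← π.eq_symm_apply]

lemma sum_permIndicator_loop : ∑ a, permIndicator π a a = powFixedCount π 1 := by
  simp [permIndicator, powFixedCount]

lemma sum_permIndicator_mul (a : α) (f : α → ℤ) : ∑ b, permIndicator π a b * f b = f (π a) := by
  simp [permIndicator]

lemma sum_permIndicator_two_cycle :
    ∑ a, ∑ b, permIndicator π a b * permIndicator π b a = powFixedCount π 2 := by
  simp only [sum_permIndicator_mul]
  simp [permIndicator, powFixedCount, pow_succ]

lemma sum_permIndicator_three_cycle :
    ∑ a, ∑ b, ∑ c, permIndicator π a b * permIndicator π b c * permIndicator π c a =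
      powFixedCount π 3 := by
  simp only [mul_assoc, ← mul_sum, sum_permIndicator_mul]
  simp [permIndicator, powFixedCount, pow_succ]

lemma sum_embedding_loop :
    ∑ e : Fin 3 ↪ α, permIndicator π (e 0) (e 0) =
      powFixedCount π 1 * ((Fintype.card α - 1) * (Fintype.card α - 2) : ℤ) := by
  rw [sum_embedding_fin_three fun a _ _ => permIndicator π a a]
  simp only [sum_const, card_univ, Int.nsmul_eq_mul, ← mul_sum, sum_permIndicator_loop,
    Nat.cast_ofNat]
  ring

lemma sum_embedding_edge :
    ∑ e : Fin 3 ↪ α, permIndicator π (e 0) (e 1) =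
      (Fintype.card α - powFixedCount π 1 : ℤ) * (Fintype.card α - 2) := by
  rw [sum_embedding_fin_three fun a b _ => permIndicator π a b]
  simp only [sum_const, card_univ, Int.nsmul_eq_mul, ← mul_sum, sum_permIndicator_right, mul_one,
    sum_permIndicator_loop, Nat.cast_ofNat]
  ring

lemma sum_embedding_loop_loop :
    ∑ e : Fin 3 ↪ α, permIndicator π (e 0) (e 0) * permIndicator π (e 1) (e 1) =
      powFixedCount π 1 * (powFixedCount π 1 - 1 : ℤ) * (Fintype.card α - 2) := by
  rw [sum_embedding_fin_three fun a b _ => permIndicator π a a * permIndicator π b b]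
  simp only [sum_const, card_univ, Int.nsmul_eq_mul, ← mul_sum, sum_permIndicator_loop, ← sum_mul,
    permIndicator_mul_self, Nat.cast_ofNat]
  ring

lemma sum_embedding_loop_edge :
    ∑ e : Fin 3 ↪ α, permIndicator π (e 0) (e 0) * permIndicator π (e 1) (e 2) =
      powFixedCount π 1 * (Fintype.card α - powFixedCount π 1 : ℤ) := by
  rw [sum_embedding_fin_three fun a b c => permIndicator π a a * permIndicator π b c]
  simp only [← mul_sum, sum_permIndicator_right, mul_one, sum_const, card_univ, Int.nsmul_eq_mul,
    sum_permIndicator_loop, sum_permIndicator_left, ← sum_mul, permIndicator_mul_self,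
    Nat.cast_ofNat]
  ring

lemma sum_embedding_two_cycle :
    ∑ e : Fin 3 ↪ α, permIndicator π (e 0) (e 1) * permIndicator π (e 1) (e 0) =
      (powFixedCount π 2 - powFixedCount π 1 : ℤ) * (Fintype.card α - 2) := by
  rw [sum_embedding_fin_three fun a b _ => permIndicator π a b * permIndicator π b a]
  simp only [sum_const, card_univ, Int.nsmul_eq_mul, ← mul_sum, sum_permIndicator_two_cycle,
    permIndicator_mul_self, sum_permIndicator_loop, Nat.cast_ofNat]
  ring

lemma sum_embedding_path :
    ∑ e : Fin 3 ↪ α, permIndicator π (e 0) (e 1) * permIndicator π (e 1) (e 2) =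
      Fintype.card α - powFixedCount π 2 := by
  rw [sum_embedding_fin_three fun a b c => permIndicator π a b * permIndicator π b c,
    sum_comm (f := fun a b => permIndicator π a b * permIndicator π b b)]
  simp only [← mul_sum, sum_permIndicator_right, mul_one, sum_const, card_univ, Int.nsmul_eq_mul,
    sum_permIndicator_loop, sum_permIndicator_two_cycle, ← sum_mul, sum_permIndicator_left, one_mul,
    permIndicator_mul_self, Nat.cast_ofNat]
  ring

lemma sum_embedding_loop_loop_loop :
    ∑ e : Fin 3 ↪ α, permIndicator π (e 0) (e 0) * permIndicator π (e 1) (e 1)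
        * permIndicator π (e 2) (e 2) =
      powFixedCount π 1 * (powFixedCount π 1 - 1 : ℤ) * (powFixedCount π 1 - 2) := by
  have loop_repeat (a b : α) :
      permIndicator π a a * permIndicator π b b * permIndicator π a a =
        permIndicator π a a * permIndicator π b b := by
    rw [mul_right_comm, permIndicator_mul_self]
  rw [sum_embedding_fin_three fun a b c =>
    permIndicator π a a * permIndicator π b b * permIndicator π c c]
  simp only [mul_assoc, ← mul_sum, sum_permIndicator_loop, ← sum_mul, permIndicator_mul_self,
    loop_repeat, Int.nsmul_eq_mul, Nat.cast_ofNat]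
  ring

lemma sum_embedding_three_cycle :
    ∑ e : Fin 3 ↪ α, permIndicator π (e 0) (e 1) * permIndicator π (e 1) (e 2)
        * permIndicator π (e 2) (e 0) =
      powFixedCount π 3 - powFixedCount π 1 := by
  have loop_first (a c : α) :
      permIndicator π a a * permIndicator π a c * permIndicator π c a =
        if a = c then permIndicator π a a else 0 := by
    rw [mul_assoc, permIndicator_loop_mul]
  have loop_middle (a b : α) :
      permIndicator π a b * permIndicator π b b * permIndicator π b a =
        if b = a then permIndicator π b b else 0 := by
    rw [← permIndicator_loop_mul]
    ring
  have loop_last (a b : α) :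
      permIndicator π a b * permIndicator π b a * permIndicator π a a =
        if a = b then permIndicator π a a else 0 := by
    rw [mul_comm, permIndicator_loop_mul]
  rw [sum_embedding_fin_three fun a b c =>
    permIndicator π a b * permIndicator π b c * permIndicator π c a]
  simp only [loop_first, loop_middle, loop_last, sum_permIndicator_three_cycle, sum_ite_eq,
    mem_univ, ↓reduceIte, sum_permIndicator_loop, sum_ite_eq', Int.nsmul_eq_mul, Nat.cast_ofNat]
  ring

end PermIndicator

section ReversalWeight

variable {α : Type*} [DecidableEq α]

/-- An integer polynomial in the coincidences `y i = x j`. Its symmetrisation over `Perm (Fin 3)`,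
divided by `180`, is the probability that a uniformly random order places `y` oppositely to `x`;
the coefficients solve the linear system given by the 34 possible patterns of coincidences. -/
def reversalWeight (x y : Fin 3 → α) : ℤ :=
  let δ (i j : Fin 3) : ℤ := if y i = x j then 1 else 0
  5 - 6 * δ 0 0 + 6 * δ 0 1 - 3 * (δ 0 0 * δ 1 1) + 6 * (δ 0 0 * δ 1 2) + 9 * (δ 0 1 * δ 1 0)
    - 12 * (δ 0 1 * δ 1 2) + 4 * (δ 0 0 * δ 1 1 * δ 2 2) - 4 * (δ 0 1 * δ 1 2 * δ 2 0)

lemma reversalWeight_comp {β : Type*} [DecidableEq β] (g : β ↪ α) (x y : Fin 3 → β) :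
    reversalWeight (g ∘ x) (g ∘ y) = reversalWeight x y := by
  simp only [reversalWeight, Function.comp_apply, g.injective.eq_iff]

lemma sum_embedding_reversalWeight [Fintype α] (π : Perm α) {n F₁ F₂ F₃ : ℤ}
    (hn : Fintype.card α = n) (h₁ : powFixedCount π 1 = F₁) (h₂ : powFixedCount π 2 = F₂)
    (h₃ : powFixedCount π 3 = F₃) :
    ∑ e : Fin 3 ↪ α, reversalWeight e (π ∘ e) =
      5 * (n * (n - 1) * (n - 2)) - 6 * (F₁ * ((n - 1) * (n - 2))) + 6 * ((n - F₁) * (n - 2))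
        - 3 * (F₁ * (F₁ - 1) * (n - 2)) + 6 * (F₁ * (n - F₁)) + 9 * ((F₂ - F₁) * (n - 2))
        - 12 * (n - F₂) + 4 * (F₁ * (F₁ - 1) * (F₁ - 2)) - 4 * (F₃ - F₁) := by
  have const_term : ∑ _e : Fin 3 ↪ α, (5 : ℤ) = 5 * (n * (n - 1) * (n - 2)) := by
    rw [sum_embedding_fin_three fun _ _ _ => (5 : ℤ)]
    simp only [sum_const, card_univ, Int.nsmul_eq_mul, hn, Nat.cast_ofNat]
    ring
  simp only [← hn, ← h₁, ← h₂, ← h₃] at const_term ⊢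
  simp only [← sum_embedding_loop, ← sum_embedding_edge, ← sum_embedding_loop_loop,
    ← sum_embedding_loop_edge, ← sum_embedding_two_cycle, ← sum_embedding_path,
    ← sum_embedding_loop_loop_loop, ← sum_embedding_three_cycle, ← const_term, mul_sum,
    ← sum_add_distrib, ← sum_sub_distrib]
  rfl

end ReversalWeight

section RelativeOrder

variable {α β : Type*} [LinearOrder α] [LinearOrder β]

lemma existsUnique_perm_strictMono_comp [Finite β] {u : β → α} (hu : Function.Injective u) :
    ∃! s : Perm β, StrictMono (u ∘ s) := by
  have := Fintype.ofFinite β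
  let φ : β ≃o Fin (Fintype.card β) := (Fintype.orderIsoFinOfCardEq β rfl).symm
  let sort : Perm (Fin (Fintype.card β)) := Tuple.sort (u ∘ φ.symm)
  let s : Perm β := (φ.toEquiv.trans sort).trans φ.symm.toEquiv
  have strictMono_sort : StrictMono ((u ∘ φ.symm) ∘ sort) :=
    (Tuple.monotone_sort _).strictMono_of_injective
      ((hu.comp φ.symm.injective).comp sort.injective)
  have hs : StrictMono (u ∘ s) := strictMono_sort.comp φ.strictMono
  refine ⟨s, hs, fun t (ht : StrictMono (u ∘ t)) => ?_⟩
  have comp_eq : u ∘ t = u ∘ s := (ht.range_inj hs).1 <| by simp only [EquivLike.range_comp]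
  exact DFunLike.coe_injective (hu.comp_left comp_eq)

lemma factorial_card_mul_sum_perm_relOrder [Fintype α] [Fintype β] {M : Type*}
    [NonAssocSemiring M] (g : β ↪ α) (f : (β → β → Prop) → M) :
    (Fintype.card β).factorial * ∑ σ : Perm α, f (fun i j => σ (g i) < σ (g j)) =
      (Fintype.card α).factorial * ∑ τ : Perm β, f (fun i j => τ i < τ j) := by
  have sum_comp_right (τ : Perm β) : ∑ σ : Perm α, f (fun i j => σ (g (τ i)) < σ (g (τ j))) =
      ∑ σ : Perm α, f (fun i j => σ (g i) < σ (g j)) := by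
    refine Fintype.sum_equiv (Equiv.mulRight (τ.viaEmbedding g)) _ _ fun σ => ?_
    simp only [Equiv.coe_mulRight, Perm.coe_mul, Function.comp_apply, Perm.viaEmbedding_apply]
  have sum_comp_left (σ : Perm α) : ∑ τ : Perm β, f (fun i j => σ (g (τ i)) < σ (g (τ j))) =
      ∑ τ : Perm β, f (fun i j => τ i < τ j) := by
    obtain ⟨s, hs, -⟩ := existsUnique_perm_strictMono_comp (σ.injective.comp g.injective)
    refine (Fintype.sum_equiv (Equiv.mulLeft s) _ _ fun τ => ?_).symm
    congr! 3 with i j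
    exact hs.lt_iff_lt.symm
  calc (Fintype.card β).factorial * ∑ σ : Perm α, f (fun i j => σ (g i) < σ (g j))
      = ∑ τ : Perm β, ∑ σ : Perm α, f (fun i j => σ (g (τ i)) < σ (g (τ j))) := by
        simp only [sum_comp_right, sum_const, card_univ, Fintype.card_perm, nsmul_eq_mul]
    _ = ∑ σ : Perm α, ∑ τ : Perm β, f (fun i j => σ (g (τ i)) < σ (g (τ j))) := sum_comm
    _ = (Fintype.card α).factorial * ∑ τ : Perm β, f (fun i j => τ i < τ j) := by
        simp only [sum_comp_left, sum_const, card_univ, Fintype.card_perm, nsmul_eq_mul]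

end RelativeOrder

section ReversalCount

variable {α ι : Type*} [LinearOrder α] [Fintype α] [Fintype ι]

/-- The number of relabellings `σ` of `α` that put the family `y` in the order opposite to that
of `x`. -/
def reversalCount (x y : ι → α) : ℕ :=
  #{σ : Perm α | ∀ i j, σ (x i) < σ (x j) → σ (y j) < σ (y i)}

lemma factorial_card_mul_reversalCount_comp {β : Type*} [LinearOrder β] [Fintype β]
    (g : β ↪ α) (x y : ι → β) :
    (Fintype.card β).factorial * reversalCount (g ∘ x) (g ∘ y) =
      (Fintype.card α).factorial * reversalCount x y := by
  classical
  have h := factorial_card_mul_sum_perm_relOrder g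
    fun R => if ∀ i j, R (x i) (x j) → R (y j) (y i) then 1 else 0
  simp only [Nat.cast_id] at h
  simp only [reversalCount, card_filter, Function.comp_apply]
  convert h

end ReversalCount

section Overlap

variable {α ι : Type*}

/-- The points of two injective families `x, y : ι → α` with overlap `κ`, where `κ i = some j`
means `y i = x j` and `κ i = none` means that `y i` is not a value of `x`. The lexicographic sum
only serves to put some linear order on the model. -/
abbrev OverlapModel (κ : ι → Option ι) : Type _ := ι ⊕ₗ {i // κ i = none}

namespace OverlapModel

/-- The family `x` in the model. -/
def fst (κ : ι → Option ι) (i : ι) : OverlapModel κ := toLex (.inl i)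

/-- The family `y` in the model. -/
def snd (κ : ι → Option ι) (i : ι) : OverlapModel κ :=
  match h : κ i with
  | some j => toLex (.inl j)
  | none => toLex (.inr ⟨i, h⟩)

lemma exists_embedding (x y : ι ↪ α) :
    ∃ (κ : ι → Option ι) (g : OverlapModel κ ↪ α),
      (∀ i j, κ i = κ j → κ i = none ∨ i = j) ∧ g ∘ fst κ = x ∧ g ∘ snd κ = y := by
  let κ : ι → Option ι := Function.partialInv x ∘ y
  have κ_eq_some_iff (i j : ι) : κ i = some j ↔ x j = y i := x.injective.isPartialInv j (y i)
  have κ_inj (i j : ι) (hij : κ i = κ j) : κ i = none ∨ i = j :=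
    (κ i).eq_none_or_eq_some.imp_right fun ⟨k, hk⟩ => y.injective <|
      ((κ_eq_some_iff i k).1 hk).symm.trans ((κ_eq_some_iff j k).1 (hij ▸ hk))
  have x_ne_y (j : ι) (i : {i // κ i = none}) : x j ≠ y i := fun h =>
    Option.some_ne_none j (((κ_eq_some_iff i j).2 h).symm.trans i.2)
  refine ⟨κ, ⟨Sum.elim x (y ∘ Subtype.val) ∘ ofLex, Function.Injective.comp
    (x.injective.sumElim (y.injective.comp Subtype.val_injective) x_ne_y) ofLex.injective⟩,
    κ_inj, rfl, ?_⟩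
  funext i
  simp only [Function.comp_apply, snd]
  split
  next j h => exact (κ_eq_some_iff i j).1 h
  next => rfl

end OverlapModel

lemma reversalCount_overlapModel : ∀ κ : Fin 3 → Option (Fin 3),
    (∀ i j, κ i = κ j → κ i = none ∨ i = j) →
    (180 * reversalCount (OverlapModel.fst κ) (OverlapModel.snd κ) : ℤ) =
      (Fintype.card (OverlapModel κ)).factorial *
        ∑ τ : Perm (Fin 3), reversalWeight (OverlapModel.fst κ ∘ τ) (OverlapModel.snd κ ∘ τ) := by
  decide +kernel

lemma reversalCount_eq_sum_reversalWeight [LinearOrder α] [Fintype α] (x y : Fin 3 ↪ α) :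
    (180 * reversalCount x y : ℤ) =
      (Fintype.card α).factorial * ∑ τ : Perm (Fin 3), reversalWeight (x ∘ τ) (y ∘ τ) := by
  obtain ⟨κ, g, κ_inj, hx, hy⟩ := OverlapModel.exists_embedding x y
  have model := reversalCount_overlapModel κ κ_inj
  have transfer := factorial_card_mul_reversalCount_comp g (OverlapModel.fst κ) (OverlapModel.snd κ)
  rw [hx, hy] at transfer
  have weight_eq (τ : Perm (Fin 3)) : reversalWeight (x ∘ τ) (y ∘ τ) =
      reversalWeight (OverlapModel.fst κ ∘ τ) (OverlapModel.snd κ ∘ τ) := by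
    rw [← hx, ← hy, Function.comp_assoc, Function.comp_assoc, reversalWeight_comp]
  have model_ne : ((Fintype.card (OverlapModel κ)).factorial : ℤ) ≠ 0 := by positivity
  simp only [weight_eq]
  apply mul_left_cancel₀ model_ne
  zify at transfer
  linear_combination 180 * transfer + (Fintype.card α).factorial * model

end Overlap

section Occurrences

variable {α ι : Type*} [LinearOrder α] [Fintype α]

lemma strictAnti_comp_iff_of_strictMono_comp {β γ δ : Type*} [LinearOrder β] [Preorder γ]
    [Preorder δ] {u : β → γ} {v : β → δ} {s : Perm β} (hs : StrictMono (u ∘ s)) :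
    StrictAnti (v ∘ s) ↔ ∀ i j, u i < u j → v j < v i := by
  refine ⟨fun h i j hij => ?_, fun h i j hij => h _ _ (hs hij)⟩
  have hij' : s.symm i < s.symm j := hs.lt_iff_lt.1 (by simpa using hij)
  simpa using h hij'

lemma factorial_card_mul_card_strictMono_strictAnti [LinearOrder ι] [Fintype ι] (π : Perm α) :
    (Fintype.card ι).factorial * #{e : ι ↪ α | StrictMono e ∧ StrictAnti (π ∘ e)} =
      #{e : ι ↪ α | ∀ i j, e i < e j → π (e j) < π (e i)} := by
  have unique_sort (e : ι ↪ α) :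
      (∑ τ : Perm ι, if StrictMono (e ∘ τ) ∧ StrictAnti (π ∘ e ∘ τ) then 1 else 0) =
        if ∀ i j, e i < e j → π (e j) < π (e i) then 1 else 0 := by
    obtain ⟨s, hs, s_unique⟩ := existsUnique_perm_strictMono_comp e.injective
    rw [Fintype.sum_eq_single s fun τ hτ => if_neg fun h => hτ (s_unique τ h.1)]
    refine if_congr ?_ rfl rfl
    rw [and_iff_right hs, ← Function.comp_assoc, strictAnti_comp_iff_of_strictMono_comp hs]
    rfl
  simp only [card_filter, ← unique_sort]
  exact (sum_embedding_sum_perm_comp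
    fun x : ι → α => if StrictMono x ∧ StrictAnti (π ∘ x) then 1 else 0).symm

/-- The number of occurrences of the classical pattern 321 in `π`. -/
def occ321 (π : Perm α) : ℕ :=
  #{x : α × α × α | x.1 < x.2.1 ∧ x.2.1 < x.2.2 ∧ π x.2.1 < π x.1 ∧ π x.2.2 < π x.2.1}

lemma occ321_eq_card_embedding (π : Perm α) :
    occ321 π = #{e : Fin 3 ↪ α | StrictMono e ∧ StrictAnti (π ∘ e)} := by
  have pattern_iff (x : Fin 3 → α) : StrictMono x ∧ StrictAnti (π ∘ x) ↔
      x 0 < x 1 ∧ x 1 < x 2 ∧ π (x 1) < π (x 0) ∧ π (x 2) < π (x 1) := by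
    simp [Fin.strictMono_iff_lt_succ, Fin.strictAnti_iff_succ_lt, Fin.forall_fin_two, and_assoc]
  symm
  refine card_bij (fun e _ => (e 0, e 1, e 2)) (fun e he => ?_) (fun e _ e' _ h => ?_) ?_
  · simpa only [mem_filter, mem_univ, true_and, pattern_iff] using he
  · simp only [Prod.mk.injEq] at h
    ext i
    fin_cases i
    exacts [h.1, h.2.1, h.2.2]
  · rintro ⟨a, b, c⟩ h
    have habc := (pattern_iff ![a, b, c]).2 (mem_filter.1 h).2
    exact ⟨⟨![a, b, c], habc.1.injective⟩, mem_filter.2 ⟨mem_univ _, habc⟩, rfl⟩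

lemma sum_card_reversing_conj [Fintype ι] (π : Perm α) :
    ∑ σ : Perm α, #{e : ι ↪ α | ∀ i j, e i < e j → (σ * π * σ⁻¹) (e j) < (σ * π * σ⁻¹) (e i)} =
      ∑ e : ι ↪ α, reversalCount e (π ∘ e) := by
  have relabel (σ : Perm α) :
      #{e : ι ↪ α | ∀ i j, e i < e j → (σ * π * σ⁻¹) (e j) < (σ * π * σ⁻¹) (e i)} =
        #{e : ι ↪ α | ∀ i j, σ (e i) < σ (e j) → σ (π (e j)) < σ (π (e i))} :=
    (card_equiv ((Equiv.refl ι).embeddingCongr σ) fun e => by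
      rw [mem_filter_univ, mem_filter_univ]; simp).symm
  simp only [relabel, reversalCount, card_filter]
  exact sum_comm

lemma sum_occ321_conj (π : Perm α) :
    (180 * ∑ σ : Perm α, occ321 (σ * π * σ⁻¹) : ℤ) =
      (Fintype.card α).factorial * ∑ e : Fin 3 ↪ α, reversalWeight e (π ∘ e) := by
  have six_mul_sum : 6 * ∑ σ : Perm α, occ321 (σ * π * σ⁻¹) =
      ∑ e : Fin 3 ↪ α, reversalCount e (π ∘ e) := by
    rw [← sum_card_reversing_conj, mul_sum]
    refine sum_congr rfl fun σ _ => ?_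
    rw [occ321_eq_card_embedding]
    convert factorial_card_mul_card_strictMono_strictAnti (ι := Fin 3) (σ * π * σ⁻¹)
    rfl
  zify at six_mul_sum
  have symmetrise := sum_embedding_sum_perm_comp fun x : Fin 3 → α => reversalWeight x (π ∘ x)
  have weigh (e : Fin 3 ↪ α) : (180 * reversalCount e (π ∘ e) : ℤ) = (Fintype.card α).factorial *
      ∑ τ : Perm (Fin 3), reversalWeight (e ∘ τ) (π ∘ e ∘ τ) :=
    reversalCount_eq_sum_reversalWeight e (e.trans π.toEmbedding)
  refine mul_left_cancel₀ (by norm_num : (6 : ℤ) ≠ 0) ?_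
  calc (6 * (180 * ∑ σ : Perm α, occ321 (σ * π * σ⁻¹)) : ℤ)
      = ∑ e : Fin 3 ↪ α, (180 * reversalCount e (π ∘ e) : ℤ) := by
        rw [mul_left_comm, Nat.cast_sum, six_mul_sum, mul_sum]
    _ = (Fintype.card α).factorial *
          ∑ e : Fin 3 ↪ α, ∑ τ : Perm (Fin 3), reversalWeight (e ∘ τ) (π ∘ e ∘ τ) := by
        simp only [weigh, mul_sum]
    _ = 6 * ((Fintype.card α).factorial * ∑ e : Fin 3 ↪ α, reversalWeight e (π ∘ e)) := by
        rw [symmetrise, mul_left_comm]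
        rfl

end Occurrences

section ConjugacyClass

variable {n : ℕ} {lam : n.Partition}

lemma conj_mem_conjClass_iff (σ π : Perm (Fin n)) :
    σ * π * σ⁻¹ ∈ conjClass n lam ↔ π ∈ conjClass n lam := by
  have partition_conj : (σ * π * σ⁻¹).partition = π.partition :=
    (Perm.partition_eq_of_isConj.1 (isConj_iff.2 ⟨σ, rfl⟩)).symm
  simp only [conjClass, mem_filter, mem_univ, true_and, partition_conj]

lemma factorial_mul_sum_conjClass {M : Type*} [NonAssocSemiring M] (f : Perm (Fin n) → M) :
    n.factorial * ∑ π ∈ conjClass n lam, f π =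
      ∑ π ∈ conjClass n lam, ∑ σ : Perm (Fin n), f (σ * π * σ⁻¹) := by
  have sum_conj (σ : Perm (Fin n)) :
      ∑ π ∈ conjClass n lam, f (σ * π * σ⁻¹) = ∑ π ∈ conjClass n lam, f π :=
    sum_equiv (MulAut.conj σ).toEquiv (fun π => (conj_mem_conjClass_iff σ π).symm) fun _ _ => rfl
  rw [sum_comm]
  simp [sum_conj, Fintype.card_perm]

end ConjugacyClass

lemma cast_choose_three (n : ℕ) : (n.choose 3 : ℚ) = n * (n - 1) * (n - 2) / 6 := by
  rw [Nat.cast_choose_eq_descPochhammer_div]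
  simp [descPochhammer_succ_right, Nat.factorial]

lemma sum_occ321_conj_eq_polynomial {α : Type*} [LinearOrder α] [Fintype α] (π : Perm α)
    {p q r : ℚ} (hp : p = π.partition.parts.count 1) (hq : q = π.partition.parts.count 2)
    (hr : r = π.partition.parts.count 3) :
    ∑ σ : Perm α, (occ321 (σ * π * σ⁻¹) : ℚ) = (Fintype.card α).factorial *
      ((Fintype.card α).choose 3 / 6 - (Fintype.card α + 1) * (Fintype.card α - 3) * (p - 1) / 30
        + (Fintype.card α + 1) * ((p - 1) * (p - 2) / 2 + q - 1) / 30
        - (2 * Fintype.card α - 3) * ((p - 1) * (p - 2) / 2 - q) / 30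
        + ((p - 1) * (p - 2) * (p - 3) / 3 - p - r + 2) / 15) := by
  have fixed_one : (powFixedCount π 1 : ℚ) = p := by
    simp [powFixedCount_eq_sum_divisors, hp]
  have fixed_two : (powFixedCount π 2 : ℚ) = p + 2 * q := by
    rw [powFixedCount_eq_sum_divisors π two_ne_zero, Nat.prime_two.sum_divisors, hp, hq]
    push_cast
    ring
  have fixed_three : (powFixedCount π 3 : ℚ) = p + 3 * r := by
    rw [powFixedCount_eq_sum_divisors π three_ne_zero, Nat.prime_three.sum_divisors, hp, hr]
    push_cast
    ring
  have total := sum_occ321_conj π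
  rw [sum_embedding_reversalWeight π rfl rfl rfl rfl] at total
  qify at total
  rw [fixed_one, fixed_two, fixed_three] at total
  rw [cast_choose_three]
  linear_combination total / 180

theorem stmt8 (n : ℕ) (hn : 3 ≤ n) (lam : n.Partition)
    (p q r X₁ X₂ X₃ X₄ : ℚ)
    (hp : p = (lam.parts.count 1 : ℚ)) (hq : q = (lam.parts.count 2 : ℚ))
    (hr : r = (lam.parts.count 3 : ℚ))
    (hX1 : X₁ = p - 1) (hX2 : X₂ = (p - 1) * (p - 2) / 2 + q - 1)
    (hX3 : X₃ = (p - 1) * (p - 2) / 2 - q)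
    (hX4 : X₄ = (p - 1) * (p - 2) * (p - 3) / 3 - p - r + 2) :
    (∑ π ∈ conjClass n lam,
      ((((Finset.univ : Finset (Fin n × Fin n × Fin n)).filter fun x =>
          x.1 < x.2.1 ∧ x.2.1 < x.2.2 ∧ π x.2.1 < π x.1 ∧ π x.2.2 < π x.2.1).card : ℚ)))
    = ((conjClass n lam).card : ℚ) *
      ((n.choose 3 : ℚ) / 6 - ((n : ℚ) + 1) * ((n : ℚ) - 3) * X₁ / 30
        + ((n : ℚ) + 1) * X₂ / 30 - (2 * (n : ℚ) - 3) * X₃ / 30 + X₄ / 15) := by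
  have conj_average (π : Perm (Fin n)) (hπ : π ∈ conjClass n lam) :=
    sum_occ321_conj_eq_polynomial π (p := p) (q := q) (r := r)
      (by rw [hp, (mem_filter.1 hπ).2]) (by rw [hq, (mem_filter.1 hπ).2])
      (by rw [hr, (mem_filter.1 hπ).2])
  have class_average := factorial_mul_sum_conjClass (lam := lam) fun π => (occ321 π : ℚ)
  rw [sum_congr rfl conj_average, sum_const, nsmul_eq_mul, mul_left_comm, Fintype.card_fin,
    ← hX4, ← hX3, ← hX2, ← hX1] at class_average
  exact mul_left_cancel₀ (by positivity) class_average
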